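/- Fix n ≥ 1, d ≥ 1 and configurations x, y : Fin n → ℝ^d. For every unit vector θ ∈ ℝ^d and all θ-sorting permutations σ for x and τ for y, the squared Wasserstein distance is bounded above: W²(x,y) ≤ SWGG(x,y,θ;σ,τ). Consequently W²(x,y) ≤ min-SWGG(x,y), the infimum of SWGG(x,y,θ;σ,τ) over all unit vectors θ and all θ-sorting permutations σ, τ. -/

import Mathlib

open scoped RealInnerProductSpace

/-- The SWGG value associated to configurations `x, y` and permutations `σ, τ`:
`(1/n) Σ_i ‖x_{σ(i)} − y_{τ(i)}‖²`. -/
noncomputable def SWGG {n d : ℕ} (x y : Fin n → EuclideanSpace ℝ (Fin d))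
    (σ τ : Equiv.Perm (Fin n)) : ℝ :=
  (n : ℝ)⁻¹ * ∑ i, ‖x (σ i) - y (τ i)‖ ^ 2

/-- A permutation `σ` is θ-sorting for `x` if `i ↦ ⟨x_{σ(i)}, θ⟩` is nondecreasing. -/
def IsSorting {n d : ℕ} (θ : EuclideanSpace ℝ (Fin d))
    (x : Fin n → EuclideanSpace ℝ (Fin d)) (σ : Equiv.Perm (Fin n)) : Prop :=
  Monotone fun i => ⟪x (σ i), θ⟫

/-- Squared 2-Wasserstein distance between the uniform empirical measures of `x` and `y`:
`(1/n) · min_ρ Σ_i ‖x_i − y_{ρ(i)}‖²`. -/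
noncomputable def Wsq {n d : ℕ} (x y : Fin n → EuclideanSpace ℝ (Fin d)) : ℝ :=
  (n : ℝ)⁻¹ * ⨅ ρ : Equiv.Perm (Fin n), ∑ i, ‖x i - y (ρ i)‖ ^ 2

/-- `min-SWGG`: the infimum of `SWGG x y θ σ τ` over unit vectors `θ` and
θ-sorting permutations `σ` for `x`, `τ` for `y`. -/
noncomputable def minSWGG {n d : ℕ} (x y : Fin n → EuclideanSpace ℝ (Fin d)) : ℝ :=
  sInf { r : ℝ | ∃ θ : EuclideanSpace ℝ (Fin d), ∃ σ τ : Equiv.Perm (Fin n),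
    ‖θ‖ = 1 ∧ IsSorting θ x σ ∧ IsSorting θ y τ ∧ r = SWGG x y σ τ }

/-- The squared Wasserstein distance is bounded above by `SWGG` for every unit direction `θ`
and θ-sorting permutations, and consequently by `min-SWGG`. -/
theorem wsq_le_SWGG_and_minSWGG {n d : ℕ} (hn : 1 ≤ n) (hd : 1 ≤ d)
    (x y : Fin n → EuclideanSpace ℝ (Fin d)) :
    (∀ (θ : EuclideanSpace ℝ (Fin d)) (σ τ : Equiv.Perm (Fin n)),
        ‖θ‖ = 1 → IsSorting θ x σ → IsSorting θ y τ → Wsq x y ≤ SWGG x y σ τ)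
      ∧ Wsq x y ≤ minSWGG x y := by
  have key : ∀ σ τ : Equiv.Perm (Fin n), Wsq x y ≤ SWGG x y σ τ := by
    intro σ τ
    unfold Wsq SWGG
    refine mul_le_mul_of_nonneg_left ?_ (by positivity)
    refine (ciInf_le (Set.finite_range _).bddBelow (σ.symm.trans τ)).trans (le_of_eq ?_)
    rw [← Equiv.sum_comp σ]
    simp
  refine ⟨fun θ σ τ _ _ _ => key σ τ, ?_⟩
  unfold minSWGG
  apply le_csInf
  · let θ : EuclideanSpace ℝ (Fin d) := EuclideanSpace.single ⟨0, hd⟩ 1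
    refine ⟨_, θ, Tuple.sort (fun i => ⟪x i, θ⟫), Tuple.sort (fun i => ⟪y i, θ⟫), ?_, ?_, ?_, rfl⟩
    · simp [θ]
    · exact Tuple.monotone_sort (fun i => ⟪x i, θ⟫)
    · exact Tuple.monotone_sort (fun i => ⟪y i, θ⟫)
  · rintro r ⟨θ, σ, τ, -, -, -, rfl⟩
    exact key σ τ
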